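/- Fix a = 1, θ = 1 and ν ∈ (1/2, 1]. Then for every σa > 0, the limit lim_{σm → ∞} F'_μ(ν, σa, σm, 1, 1)[0] exists and is strictly negative; in particular, for any additive noise intensity the system is in the unstable phase for all sufficiently large multiplicative noise intensity. -/

import Mathlib

open MeasureTheory Real Set Filter

/-- Unnormalised stationary density ρ0[μ](x) of the McKean–Vlasov SDE
`dX = (aX − X³ − θ(X − m₁))dt + σa dB¹ + σm X ∘_ν dB²`. -/
noncomputable def rho0 (ν σa σm a θ μ x : ℝ) : ℝ :=
  Real.exp (((a - θ - ν * σm ^ 2 + σa ^ 2 / σm ^ 2) / σm ^ 2) *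
      Real.log (1 + (σm ^ 2 / σa ^ 2) * x ^ 2) +
    (2 * θ * μ / (σa * σm)) * Real.arctan (σm * x / σa) - x ^ 2 / σm ^ 2)

/-- Normalisation constant Z[μ] = ∫ ρ0[μ]. -/
noncomputable def Z (ν σa σm a θ μ : ℝ) : ℝ := ∫ x : ℝ, rho0 ν σa σm a θ μ x

/-- Self-consistency function F(ν,σa,σm,a,θ)[μ] = (∫ (x−μ)·ρ0[μ]) / Z[μ]. -/
noncomputable def F (ν σa σm a θ μ : ℝ) : ℝ :=
  (∫ x : ℝ, (x - μ) * rho0 ν σa σm a θ μ x) / Z ν σa σm a θ μ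

/-- F'_μ[0] : the derivative at μ = 0 of μ ↦ F(ν,σa,σm,a,θ)[μ]. -/
noncomputable def Fmu' (ν σa σm a θ : ℝ) : ℝ := deriv (fun μ => F ν σa σm a θ μ) 0

open Topology

/-! As a function of `μ`, `rho0` is an exponential tilt of the even density at `μ = 0` by the
bounded odd function `score`, so the derivative of `F` at `μ = 0` is `E[X * score X] - 1`, the
expectation being under that density. In the variable `y = σm * x / σa` the density is
`(1 + y²) ^ p * exp (-(s * y)²)` with `p → -ν` and `s = σa / σm² → 0`, and the expectation becomes
`(2θ / σa) * E[s * y * arctan y]`. The integrand tends to `0` pointwise, and the Gaussian factor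
compensates the growth of `s * y`: `|s * y| * exp (-(s * y)²) ≤ 1`. As `ν > 1/2`, dominated
convergence gives the limit `-1`. -/

section Tilting

variable {α : Type*} [MeasurableSpace α] {m : Measure α} {h g : α → ℝ} {C : ℝ}

lemma exp_mul_le_exp_mul_of_abs_le {t T y C : ℝ} (ht : |t| ≤ T) (hy : |y| ≤ C) :
    exp (t * y) ≤ exp (T * C) :=
  exp_le_exp.2 <| (le_abs_self _).trans <|
    (abs_mul t y).trans_le (mul_le_mul ht hy (abs_nonneg _) ((abs_nonneg _).trans ht))

lemma integrable_mul_exp_mul (hh : Integrable h m) (hg : AEStronglyMeasurable g m)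
    (hC : ∀ x, |g x| ≤ C) (t : ℝ) : Integrable (fun x ↦ h x * exp (t * g x)) m := by
  refine hh.mul_bdd (c := exp (|t| * C)) (continuous_exp.comp_aestronglyMeasurable (hg.const_mul t))
    (.of_forall fun x ↦ ?_)
  rw [norm_of_nonneg (exp_pos _).le]
  exact exp_mul_le_exp_mul_of_abs_le le_rfl (hC x)

lemma hasDerivAt_integral_mul_exp_mul (hh : Integrable h m) (hg : AEStronglyMeasurable g m)
    (hC : ∀ x, |g x| ≤ C) (t₀ : ℝ) :
    HasDerivAt (fun t ↦ ∫ x, h x * exp (t * g x) ∂m)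
      (∫ x, h x * (exp (t₀ * g x) * g x) ∂m) t₀ := by
  have hexp : AEStronglyMeasurable (fun x ↦ exp (t₀ * g x)) m :=
    continuous_exp.comp_aestronglyMeasurable (hg.const_mul t₀)
  refine (hasDerivAt_integral_of_dominated_loc_of_deriv_le
    (F' := fun t x ↦ h x * (exp (t * g x) * g x))
    (bound := fun x ↦ ‖h x‖ * (exp ((|t₀| + 1) * C) * C)) (Metric.ball_mem_nhds t₀ one_pos)
    (.of_forall fun t ↦ (integrable_mul_exp_mul hh hg hC t).aestronglyMeasurable)
    (integrable_mul_exp_mul hh hg hC t₀) (hh.aestronglyMeasurable.mul (hexp.mul hg))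
    (.of_forall fun x t ht ↦ ?_) (hh.norm.mul_const _) (.of_forall fun x t _ ↦ ?_)).2
  · have ht' : |t| ≤ |t₀| + 1 := by
      have := abs_sub_abs_le_abs_sub t t₀
      rw [Metric.mem_ball, Real.dist_eq] at ht
      linarith
    rw [norm_mul, norm_mul, norm_of_nonneg (exp_pos _).le]
    exact mul_le_mul_of_nonneg_left (mul_le_mul (exp_mul_le_exp_mul_of_abs_le ht' (hC x)) (hC x)
      (norm_nonneg _) (exp_pos _).le) (norm_nonneg _)
  · exact (hasDerivAt_mul_const (g x)).exp.const_mul (h x)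

lemma hasDerivAt_tilted_mean_zero {f w : α → ℝ} (hw : Integrable w m)
    (hfw : Integrable (fun x ↦ f x * w x) m) (hg : AEStronglyMeasurable g m)
    (hC : ∀ x, |g x| ≤ C) (hw0 : ∫ x, w x ∂m ≠ 0) :
    HasDerivAt
      (fun t ↦ (∫ x, f x * w x * exp (t * g x) ∂m) / ∫ x, w x * exp (t * g x) ∂m)
      ((∫ x, f x * w x * g x ∂m) / ∫ x, w x ∂m -
        (∫ x, f x * w x ∂m) / (∫ x, w x ∂m) * ((∫ x, w x * g x ∂m) / ∫ x, w x ∂m)) 0 := by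
  have hnum := hasDerivAt_integral_mul_exp_mul hfw hg hC 0
  have hden := hasDerivAt_integral_mul_exp_mul hw hg hC 0
  refine (hnum.div hden (by simpa using hw0)).congr_deriv ?_
  simp only [zero_mul, exp_zero, one_mul, mul_one]
  field_simp

end Tilting

lemma log_le_mul_sub_one_sub_log {ε x : ℝ} (hε : 0 < ε) (hx : 0 < x) :
    log x ≤ ε * x - 1 - log ε := by
  have := log_le_sub_one_of_pos (mul_pos hε hx)
  rw [log_mul hε.ne' hx.ne'] at this
  linarith

lemma exists_mul_log_one_add_mul_sq_le (p : ℝ) {κ b : ℝ} (hκ : 0 ≤ κ) (hb : 0 < b) :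
    ∃ C, ∀ x : ℝ, p * log (1 + κ * x ^ 2) ≤ b * x ^ 2 + C := by
  set ε := b / (|p| * κ + 1) with hε_def
  have hε : 0 < ε := by positivity
  have hεb : |p| * κ * ε ≤ b := by
    rw [hε_def, ← mul_div_assoc, div_le_iff₀ (by positivity)]
    nlinarith
  refine ⟨|p| * (ε - 1 - log ε), fun x ↦ ?_⟩
  have hlog_nonneg : 0 ≤ log (1 + κ * x ^ 2) := log_nonneg (by nlinarith [sq_nonneg x])
  calc p * log (1 + κ * x ^ 2)
      ≤ |p| * log (1 + κ * x ^ 2) := by gcongr; exact le_abs_self p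
    _ ≤ |p| * (ε * (1 + κ * x ^ 2) - 1 - log ε) := by
        gcongr; exact log_le_mul_sub_one_sub_log hε (by positivity)
    _ = |p| * κ * ε * x ^ 2 + |p| * (ε - 1 - log ε) := by ring
    _ ≤ b * x ^ 2 + |p| * (ε - 1 - log ε) := by gcongr

/-- The logarithmic derivative in `μ` of the density `rho0`. It is bounded in `x`, so that `rho0`
is an exponential tilt of its value at `μ = 0`. -/
noncomputable def score (σa σm θ x : ℝ) : ℝ :=
  2 * θ / (σa * σm) * arctan (σm * x / σa)

lemma continuous_score (σa σm θ : ℝ) : Continuous (score σa σm θ) := by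
  unfold score
  fun_prop

lemma abs_arctan_le_pi_div_two (x : ℝ) : |arctan x| ≤ π / 2 :=
  abs_le.2 ⟨(neg_pi_div_two_lt_arctan x).le, (arctan_lt_pi_div_two x).le⟩

lemma abs_score_le (σa σm θ x : ℝ) :
    |score σa σm θ x| ≤ |2 * θ / (σa * σm)| * (π / 2) := by
  rw [score, abs_mul]
  gcongr
  exact abs_arctan_le_pi_div_two _

section Density

variable (ν σa σm a θ : ℝ)

lemma rho0_pos (μ x : ℝ) : 0 < rho0 ν σa σm a θ μ x := exp_pos _

lemma rho0_eq_rho0_zero_mul_exp (μ x : ℝ) :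
    rho0 ν σa σm a θ μ x = rho0 ν σa σm a θ 0 x * exp (μ * score σa σm θ x) := by
  rw [rho0, rho0, score, ← exp_add]
  ring_nf

lemma rho0_zero_neg (x : ℝ) : rho0 ν σa σm a θ 0 (-x) = rho0 ν σa σm a θ 0 x := by
  simp [rho0]

lemma continuous_rho0 (μ : ℝ) : Continuous (rho0 ν σa σm a θ μ) := by
  have (x : ℝ) : 1 + σm ^ 2 / σa ^ 2 * x ^ 2 ≠ 0 := by positivity
  unfold rho0
  fun_prop (disch := exact this _)

lemma integral_id_mul_rho0_zero : ∫ x, x * rho0 ν σa σm a θ 0 x = 0 := by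
  have hodd := integral_neg_eq_self (fun x ↦ x * rho0 ν σa σm a θ 0 x) volume
  simp only [rho0_zero_neg, neg_mul, integral_neg] at hodd
  linarith

variable {σm}

lemma exists_rho0_le_mul_exp_neg_mul_sq (hσm : σm ≠ 0) (μ : ℝ) :
    ∃ C b, 0 < b ∧ ∀ x, rho0 ν σa σm a θ μ x ≤ C * exp (-b * x ^ 2) := by
  have hb : 0 < (2 * σm ^ 2)⁻¹ := by positivity
  obtain ⟨C, hC⟩ := exists_mul_log_one_add_mul_sq_le
    ((a - θ - ν * σm ^ 2 + σa ^ 2 / σm ^ 2) / σm ^ 2) (κ := σm ^ 2 / σa ^ 2) (by positivity) hb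
  refine ⟨exp C * exp (|μ| * (|2 * θ / (σa * σm)| * (π / 2))), _, hb, fun x ↦ ?_⟩
  have hzero : rho0 ν σa σm a θ 0 x ≤ exp C * exp (-(2 * σm ^ 2)⁻¹ * x ^ 2) := by
    have hhalf : x ^ 2 / σm ^ 2 = 2 * ((2 * σm ^ 2)⁻¹ * x ^ 2) := by field_simp
    rw [rho0, ← exp_add, exp_le_exp, mul_zero, zero_div, zero_mul, hhalf]
    linarith [hC x]
  rw [rho0_eq_rho0_zero_mul_exp, mul_right_comm]
  exact mul_le_mul hzero (exp_mul_le_exp_mul_of_abs_le le_rfl (abs_score_le ..)) (exp_pos _).le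
    (by positivity)

lemma integrable_mul_rho0 (hσm : σm ≠ 0) (μ : ℝ) {f : ℝ → ℝ}
    (hf : AEStronglyMeasurable f) (hgauss : ∀ b > 0, Integrable fun x ↦ f x * exp (-b * x ^ 2)) :
    Integrable fun x ↦ f x * rho0 ν σa σm a θ μ x := by
  obtain ⟨C, b, hb, hle⟩ := exists_rho0_le_mul_exp_neg_mul_sq ν σa a θ hσm μ
  refine ((hgauss b hb).norm.const_mul C).mono'
    (hf.mul (continuous_rho0 ..).aestronglyMeasurable) (.of_forall fun x ↦ ?_)
  rw [norm_mul, norm_mul, norm_of_nonneg (rho0_pos ..).le, norm_of_nonneg (exp_pos _).le,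
    mul_left_comm]
  gcongr
  exact hle x

lemma integrable_rho0 (hσm : σm ≠ 0) (μ : ℝ) : Integrable (rho0 ν σa σm a θ μ) := by
  simpa using integrable_mul_rho0 ν σa a θ hσm μ (f := fun _ ↦ 1) aestronglyMeasurable_const
    fun b hb ↦ by simpa using integrable_exp_neg_mul_sq hb

lemma integrable_id_mul_rho0 (hσm : σm ≠ 0) (μ : ℝ) :
    Integrable fun x ↦ x * rho0 ν σa σm a θ μ x :=
  integrable_mul_rho0 ν σa a θ hσm μ aestronglyMeasurable_id
    fun _ ↦ integrable_mul_exp_neg_mul_sq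

lemma Z_pos (hσm : σm ≠ 0) (μ : ℝ) : 0 < Z ν σa σm a θ μ :=
  integral_exp_pos (integrable_rho0 ν σa a θ hσm μ)

lemma F_eq_mean_sub (hσm : σm ≠ 0) (μ : ℝ) :
    F ν σa σm a θ μ = (∫ x, x * rho0 ν σa σm a θ μ x) / Z ν σa σm a θ μ - μ := by
  have hZ := (Z_pos ν σa a θ hσm μ).ne'
  simp only [F, sub_mul]
  rw [integral_sub (integrable_id_mul_rho0 ν σa a θ hσm μ)
    ((integrable_rho0 ν σa a θ hσm μ).const_mul μ), integral_const_mul, ← Z, sub_div,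
    mul_div_cancel_right₀ _ hZ]

lemma hasDerivAt_F_zero (hσm : σm ≠ 0) :
    HasDerivAt (F ν σa σm a θ)
      ((∫ x, x * rho0 ν σa σm a θ 0 x * score σa σm θ x) / Z ν σa σm a θ 0 - 1) 0 := by
  have hmean := hasDerivAt_tilted_mean_zero (integrable_rho0 ν σa a θ hσm 0)
    (integrable_id_mul_rho0 ν σa a θ hσm 0) (continuous_score σa σm θ).aestronglyMeasurable
    (abs_score_le σa σm θ) (Z_pos ν σa a θ hσm 0).ne'
  rw [integral_id_mul_rho0_zero, zero_div, zero_mul, sub_zero] at hmean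
  refine (hmean.sub (hasDerivAt_id 0)).congr_of_eventuallyEq (.of_forall fun μ ↦ ?_)
  simp only [F_eq_mean_sub ν σa a θ hσm, Z, Pi.sub_apply, id, mul_assoc,
    ← rho0_eq_rho0_zero_mul_exp]

end Density

section Rescaling

/-- The density `rho0` at `μ = 0` in the rescaled variable `y = σm * x / σa`, where the exponent
`p` and `s = σa / σm ^ 2` carry all the dependence on the parameters. -/
noncomputable def rescaledWeight (p s y : ℝ) : ℝ :=
  (1 + y ^ 2) ^ p * exp (-(s * y) ^ 2)

/-- The exponent of `1 + y ^ 2` in `rho0` written in the rescaled variable `y = σm * x / σa`. -/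
noncomputable def rescaledExponent (ν σa σm a θ : ℝ) : ℝ :=
  (a - θ - ν * σm ^ 2 + σa ^ 2 / σm ^ 2) / σm ^ 2

variable {σa σm : ℝ} (ν a θ : ℝ)

lemma rho0_zero_div_mul_eq_rescaledWeight (hσa : σa ≠ 0) (hσm : σm ≠ 0) (y : ℝ) :
    rho0 ν σa σm a θ 0 (σa / σm * y) =
      rescaledWeight (rescaledExponent ν σa σm a θ) (σa / σm ^ 2) y := by
  have hlog : σm ^ 2 / σa ^ 2 * (σa / σm * y) ^ 2 = y ^ 2 := by field_simp
  have hgauss : (σa / σm * y) ^ 2 / σm ^ 2 = (σa / σm ^ 2 * y) ^ 2 := by field_simp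
  rw [rho0, rescaledWeight, rescaledExponent, rpow_def_of_pos (by positivity),
    ← exp_add, hlog, hgauss]
  ring_nf

lemma Fmu'_eq_mul_rescaledWeight_mean_sub_one (hσa : σa ≠ 0) (hσm : σm ≠ 0) :
    Fmu' ν σa σm a θ =
      2 * θ / σa *
        ((∫ y, σa / σm ^ 2 * y * arctan y *
            rescaledWeight (rescaledExponent ν σa σm a θ) (σa / σm ^ 2) y) /
          ∫ y, rescaledWeight (rescaledExponent ν σa σm a θ) (σa / σm ^ 2) y) - 1 := by
  have hb : |(σa / σm)⁻¹| ≠ 0 := by positivity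
  have harctan (y : ℝ) : σm * (σa / σm * y) / σa = y := by field_simp
  rw [Fmu', (hasDerivAt_F_zero ν σa a θ hσm).deriv, Z,
    ← mul_div_mul_left _ (∫ x, rho0 ν σa σm a θ 0 x) hb, ← smul_eq_mul, ← smul_eq_mul,
    ← Measure.integral_comp_mul_left, ← Measure.integral_comp_mul_left, ← mul_div_assoc,
    ← integral_const_mul]
  simp only [rho0_zero_div_mul_eq_rescaledWeight ν a θ hσa hσm, score, harctan]
  congr! 4
  field_simp

end Rescaling

section Limit

variable {ι : Type*} {l : Filter ι} [l.IsCountablyGenerated] {q : ℝ} {p s : ι → ℝ}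

lemma integrable_one_add_sq_rpow (hq : q < -(1 / 2)) :
    Integrable fun y : ℝ ↦ (1 + y ^ 2) ^ q := by
  simpa [neg_div] using integrable_rpow_neg_one_add_norm_sq (E := ℝ) (μ := volume) (r := -2 * q)
    (by rw [Module.finrank_self]; push_cast; linarith)

lemma integral_one_add_sq_rpow_pos (hq : q < -(1 / 2)) :
    0 < ∫ y : ℝ, (1 + y ^ 2) ^ q := by
  have hpos (y : ℝ) : 0 < 1 + y ^ 2 := by positivity
  have hint := integrable_one_add_sq_rpow hq
  simp only [rpow_def_of_pos (hpos _)] at hint ⊢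
  exact integral_exp_pos hint

lemma tendsto_integral_one_add_sq_rpow_mul {C : ℝ} {H : ι → ℝ → ℝ} {H₀ : ℝ → ℝ}
    (hq : q < -(1 / 2)) (hp : Tendsto p l (𝓝 q))
    (hmeas : ∀ i, AEStronglyMeasurable (H i)) (hC : ∀ i y, |H i y| ≤ C)
    (hH : ∀ y, Tendsto (H · y) l (𝓝 (H₀ y))) :
    Tendsto (fun i ↦ ∫ y, (1 + y ^ 2) ^ p i * H i y) l
      (𝓝 (∫ y, (1 + y ^ 2) ^ q * H₀ y)) := by
  have hpos (y : ℝ) : 1 + y ^ 2 ≠ 0 := by positivity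
  obtain ⟨r, hqr, hr⟩ := exists_between hq
  refine tendsto_integral_filter_of_dominated_convergence (fun y ↦ (1 + y ^ 2) ^ r * C)
    (.of_forall fun i ↦ ?_) ?_ ((integrable_one_add_sq_rpow hr).mul_const C)
    (.of_forall fun y ↦ (tendsto_const_nhds.rpow hp (.inl (hpos y))).mul (hH y))
  · have : Continuous fun y : ℝ ↦ (1 + y ^ 2) ^ p i :=
      Continuous.rpow_const (by fun_prop) fun y ↦ .inl (hpos y)
    exact this.aestronglyMeasurable.mul (hmeas i)
  · filter_upwards [hp.eventually_le_const hqr] with i hi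
    refine .of_forall fun y ↦ ?_
    rw [norm_mul, norm_of_nonneg (by positivity)]
    gcongr
    exacts [by nlinarith [sq_nonneg y], hC i y]

lemma tendsto_integral_rescaledWeight (hq : q < -(1 / 2))
    (hp : Tendsto p l (𝓝 q)) (hs : Tendsto s l (𝓝 0)) :
    Tendsto (fun i ↦ ∫ y, rescaledWeight (p i) (s i) y) l (𝓝 (∫ y, (1 + y ^ 2) ^ q)) := by
  have hle (i : ι) (y : ℝ) : |exp (-(s i * y) ^ 2)| ≤ 1 := by
    rw [abs_exp, exp_le_one_iff]
    exact neg_nonpos.2 (sq_nonneg _)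
  have hlim (y : ℝ) : Tendsto (fun i ↦ exp (-(s i * y) ^ 2)) l (𝓝 1) := by
    simpa using ((hs.mul_const y).pow 2).neg.rexp
  have hmeas (i : ι) : AEStronglyMeasurable fun y ↦ exp (-(s i * y) ^ 2) :=
    Continuous.aestronglyMeasurable (by fun_prop)
  simpa [rescaledWeight] using tendsto_integral_one_add_sq_rpow_mul hq hp hmeas hle hlim

lemma abs_mul_exp_neg_sq_le_one (x : ℝ) : |x| * exp (-x ^ 2) ≤ 1 := by
  rw [exp_neg, ← div_eq_mul_inv, div_le_one (exp_pos _)]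
  nlinarith [add_one_le_exp (x ^ 2), sq_abs x, sq_nonneg (|x| - 1)]

lemma tendsto_integral_mul_arctan_mul_rescaledWeight (hq : q < -(1 / 2))
    (hp : Tendsto p l (𝓝 q)) (hs : Tendsto s l (𝓝 0)) :
    Tendsto (fun i ↦ ∫ y, s i * y * arctan y * rescaledWeight (p i) (s i) y) l (𝓝 0) := by
  have hle (i : ι) (y : ℝ) : |arctan y * (s i * y * exp (-(s i * y) ^ 2))| ≤ π / 2 := by
    rw [abs_mul, abs_mul (s i * y), abs_exp]
    exact (mul_le_mul (abs_arctan_le_pi_div_two y) (abs_mul_exp_neg_sq_le_one _) (by positivity)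
      (by positivity)).trans_eq (mul_one _)
  have hlim (y : ℝ) :
      Tendsto (fun i ↦ arctan y * (s i * y * exp (-(s i * y) ^ 2))) l (𝓝 0) := by
    have hsy := hs.mul_const y
    simpa using (hsy.mul (hsy.pow 2).neg.rexp).const_mul (arctan y)
  have hmeas (i : ι) :
      AEStronglyMeasurable fun y ↦ arctan y * (s i * y * exp (-(s i * y) ^ 2)) :=
    Continuous.aestronglyMeasurable (by fun_prop)
  have h := tendsto_integral_one_add_sq_rpow_mul hq hp hmeas hle hlim
  simp only [mul_zero, integral_zero] at h
  refine h.congr fun i ↦ integral_congr_ae (.of_forall fun y ↦ ?_)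
  simp only [rescaledWeight]
  ring

end Limit

lemma tendsto_rescaledExponent (ν σa a θ : ℝ) :
    Tendsto (fun σm ↦ rescaledExponent ν σa σm a θ) atTop (𝓝 (-ν)) := by
  have hsq : Tendsto (fun σm : ℝ ↦ σm ^ 2) atTop atTop := tendsto_pow_atTop two_ne_zero
  have hlim := ((hsq.const_div_atTop (a - θ)).sub_const ν).add
    ((hsq.const_div_atTop σa).pow 2)
  rw [zero_sub, zero_pow two_ne_zero, add_zero] at hlim
  refine hlim.congr' ?_
  filter_upwards [eventually_ne_atTop 0] with σm hσm
  rw [rescaledExponent]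
  field_simp

theorem stmt7_general {ν σa : ℝ} (hν : 1 / 2 < ν) (hσa : σa ≠ 0) (a θ : ℝ) :
    Tendsto (fun σm : ℝ ↦ Fmu' ν σa σm a θ) atTop (𝓝 (-1)) := by
  have hp := tendsto_rescaledExponent ν σa a θ
  have hs : Tendsto (fun σm : ℝ ↦ σa / σm ^ 2) atTop (𝓝 0) :=
    (tendsto_pow_atTop two_ne_zero).const_div_atTop σa
  have hq : -ν < -(1 / 2) := neg_lt_neg hν
  have hratio := (tendsto_integral_mul_arctan_mul_rescaledWeight hq hp hs).div
    (tendsto_integral_rescaledWeight hq hp hs) (integral_one_add_sq_rpow_pos hq).ne'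
  have hlim := (hratio.const_mul (2 * θ / σa)).sub_const 1
  rw [zero_div, mul_zero, zero_sub] at hlim
  refine hlim.congr' ?_
  filter_upwards [eventually_ne_atTop 0] with σm hσm
  exact (Fmu'_eq_mul_rescaledWeight_mean_sub_one ν a θ hσa hσm).symm

/-- With a = θ = 1 and ν ∈ (1/2, 1], for every σa > 0 the limit of F'_μ[0] as
σm → ∞ exists and is strictly negative; in particular the system is in the unstable phase for
all sufficiently large multiplicative noise. -/
theorem stmt7 (ν : ℝ) (hν : ν ∈ Set.Ioc (1 / 2 : ℝ) 1) (σa : ℝ) (hσa : 0 < σa) :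
    ∃ L : ℝ, L < 0 ∧ Tendsto (fun σm : ℝ => Fmu' ν σa σm 1 1) atTop (nhds L) ∧
      ∀ᶠ σm : ℝ in atTop, Fmu' ν σa σm 1 1 < 0 := by
  have hlim := stmt7_general hν.1 hσa.ne' 1 1
  exact ⟨-1, by norm_num, hlim, hlim.eventually_lt_const (by norm_num)⟩
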